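/- An irreducible skew-symmetric augmented matrix of dimension n ≥ 1 is not trivial, i.e., it is not S-equivalent to the empty matrix. -/

import Mathlib

/-- A skew-symmetric augmented matrix `(B ∣ A)` of dimension `n`:
`B` is an `n × n` integer matrix with `Bᵀ = -B` and `A` is an integer
column vector of length `n`.  Dimension `0` gives the empty matrix. -/
structure SkewAug where
  n : ℕ
  B : Matrix (Fin n) (Fin n) ℤ
  A : Fin n → ℤ
  skew : B.transpose = -B

namespace SkewAug

/-- The permutation matrix of a permutation `σ` of `Fin n`. -/
def permMatrixOf {n : ℕ} (σ : Equiv.Perm (Fin n)) : Matrix (Fin n) (Fin n) ℤ :=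
  Matrix.of fun i j => if σ j = i then 1 else 0

/-- `P` is a permutation matrix. -/
def IsPermMatrix {n : ℕ} (P : Matrix (Fin n) (Fin n) ℤ) : Prop :=
  ∃ σ : Equiv.Perm (Fin n), P = permMatrixOf σ

/-- `PermStep M N` : `N` is a permutation of `M`, i.e. there is a permutation
matrix `P` with `N = (P M.B Pᵀ ∣ P M.A)`. -/
def PermStep (M N : SkewAug) : Prop :=
  ∃ (h : M.n = N.n) (P : Matrix (Fin N.n) (Fin N.n) ℤ),
    IsPermMatrix P ∧
    N.B = P * (Matrix.reindex (finCongr h) (finCongr h) M.B) * P.transpose ∧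
    N.A = P.mulVec (fun i => M.A (Fin.cast h.symm i))

/-- `DeleteAt M S N` : `N` is obtained from `M` by deleting the rows and
columns of `M.B` indexed by `S` and the entries of `M.A` indexed by `S`. -/
def DeleteAt (M : SkewAug) (S : Set (Fin M.n)) (N : SkewAug) : Prop :=
  ∃ e : Fin N.n → Fin M.n, StrictMono e ∧ (∀ k, k ∈ Set.range e ↔ k ∉ S) ∧
    (∀ i j, N.B i j = M.B (e i) (e j)) ∧ (∀ i, N.A i = M.A (e i))

/-- The condition allowing a reduction of type 1 at index `j`:
`A j = 0` and the `j`-th column of `B` is the zero vector or equals `A`. -/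
def Red1Cond (M : SkewAug) (j : Fin M.n) : Prop :=
  M.A j = 0 ∧ ((∀ i, M.B i j = 0) ∨ (∀ i, M.B i j = M.A i))

/-- The condition allowing a reduction of type 2 at distinct indices `r, t`:
`A r = -A t` and the sum of the `r`-th and `t`-th columns of `B` equals `A`. -/
def Red2Cond (M : SkewAug) (r t : Fin M.n) : Prop :=
  r ≠ t ∧ M.A r = -M.A t ∧ ∀ i, M.B i r + M.B i t = M.A i

/-- `N` is obtained from `M` by a reduction of type 1. -/
def Red1 (M N : SkewAug) : Prop :=
  ∃ j : Fin M.n, Red1Cond M j ∧ DeleteAt M {j} N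

/-- `N` is obtained from `M` by a reduction of type 2. -/
def Red2 (M N : SkewAug) : Prop :=
  ∃ r t : Fin M.n, Red2Cond M r t ∧ DeleteAt M {r, t} N

/-- A single move: a permutation, a reduction of type 1 or 2, or an
extension of type 1 or 2 (the inverse of a reduction). -/
def Move (M N : SkewAug) : Prop :=
  PermStep M N ∨ Red1 M N ∨ Red2 M N ∨ Red1 N M ∨ Red2 N M

/-- S-equivalence: `M` can be transformed into `N` by a finite sequence of
moves. -/
def SEquiv : SkewAug → SkewAug → Prop :=
  Relation.ReflTransGen Move

/-- A reduction of type 1 or type 2 can be applied to `M`. -/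
def Reducible (M : SkewAug) : Prop :=
  (∃ j, Red1Cond M j) ∨ (∃ r t, Red2Cond M r t)

/-- `M` is irreducible: no reduction of type 1 or type 2 can be applied. -/
def Irreducible (M : SkewAug) : Prop := ¬ Reducible M

/-- The empty skew-symmetric augmented matrix. -/
def empty : SkewAug := ⟨0, 0, 0, by simp⟩

/-- `M` is trivial if it is S-equivalent to the empty matrix. -/
def Trivial (M : SkewAug) : Prop := SEquiv M empty

end SkewAug

/-! Deleting an index set for which a reduction of type 1 or 2 is available, or the empty set, and
relabelling the remaining indices arbitrarily, is a rewriting relation with the diamond property.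
Deletions of disjoint sets commute. If the deleted sets are `{j}` and `{j, t}`, then the columns
`j` and `t` are `0` and `A` in some order, so `t` can be deleted after `j`. If they are `{r, t}`
and `{r, t'}`, then the columns `t` and `t'` agree, so by skew-symmetry exchanging `t` and `t'` is
an automorphism and the two results are permutations of each other. By the Church–Rosser theorem,
S-equivalent matrices have a common descendant, and the descendants of an irreducible matrix are
its permutations. -/

namespace SkewAug

variable {M N P : SkewAug}

section Columns

/-- The `j`-th column of `B` followed by the entry `A j`: up to the sign of its last entry, this is
the `j`-th column of the bordered skew-symmetric matrix `(B, A; -Aᵀ, 0)`. Both reduction conditions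
are linear in these columns. -/
def augCol (M : SkewAug) (j : Fin M.n) : (Fin M.n → ℤ) × ℤ := (fun i ↦ M.B i j, M.A j)

/-- The last column of the bordered skew-symmetric matrix `(B, A; -Aᵀ, 0)`. -/
def baseCol (M : SkewAug) : (Fin M.n → ℤ) × ℤ := (M.A, 0)

lemma B_apply_comm (M : SkewAug) (i j : Fin M.n) : M.B i j = -M.B j i :=
  congrFun (congrFun M.skew j) i

lemma red1Cond_iff {j : Fin M.n} :
    M.Red1Cond j ↔ M.augCol j = 0 ∨ M.augCol j = M.baseCol := by
  simp only [Red1Cond, augCol, baseCol, Prod.ext_iff, funext_iff, Prod.fst_zero, Prod.snd_zero,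
    Pi.zero_apply]
  tauto

lemma red2Cond_iff {r t : Fin M.n} :
    M.Red2Cond r t ↔ r ≠ t ∧ M.augCol r + M.augCol t = M.baseCol := by
  simp only [Red2Cond, augCol, baseCol, Prod.ext_iff, funext_iff, Prod.fst_add, Prod.snd_add,
    Pi.add_apply, eq_neg_iff_add_eq_zero]
  tauto

lemma Red2Cond.symm {r t : Fin M.n} (h : M.Red2Cond r t) : M.Red2Cond t r := by
  rw [red2Cond_iff] at h ⊢
  exact ⟨h.1.symm, add_comm (M.augCol t) _ ▸ h.2⟩

lemma Red1Cond.of_red2Cond {r t : Fin M.n} (hr : M.Red1Cond r) (hrt : M.Red2Cond r t) :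
    M.Red1Cond t := by
  have hsum := (red2Cond_iff.1 hrt).2
  rw [red1Cond_iff] at hr ⊢
  rcases hr with hr | hr <;> simp_all

lemma Red2Cond.augCol_eq {r t t' : Fin M.n} (h : M.Red2Cond r t) (h' : M.Red2Cond r t') :
    M.augCol t = M.augCol t' :=
  add_left_cancel ((red2Cond_iff.1 h).2.trans (red2Cond_iff.1 h').2.symm)

end Columns

section Submatrix

/-- `N` is the principal augmented submatrix of `M` with indices listed by `e`. The embedding need
not be monotone, so permutations are the case of a bijective `e`. -/
structure IsSubmatrix (M N : SkewAug) (e : Fin N.n ↪ Fin M.n) : Prop where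
  B_apply : ∀ i j, N.B i j = M.B (e i) (e j)
  A_apply : ∀ i, N.A i = M.A (e i)

namespace IsSubmatrix

lemma refl (M : SkewAug) : IsSubmatrix M M (.refl _) := ⟨fun _ _ ↦ rfl, fun _ ↦ rfl⟩

lemma trans {e : Fin N.n ↪ Fin M.n} {f : Fin P.n ↪ Fin N.n} (he : IsSubmatrix M N e)
    (hf : IsSubmatrix N P f) : IsSubmatrix M P (f.trans e) :=
  ⟨fun i j ↦ (hf.B_apply i j).trans (he.B_apply _ _),
    fun i ↦ (hf.A_apply i).trans (he.A_apply _)⟩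

lemma symm {e : Fin N.n ≃ Fin M.n} (he : IsSubmatrix M N e.toEmbedding) :
    IsSubmatrix N M e.symm.toEmbedding :=
  ⟨fun i j ↦ by simp [he.B_apply], fun i ↦ by simp [he.A_apply]⟩

lemma swap {s t : Fin M.n} (h : M.augCol s = M.augCol t) :
    IsSubmatrix M M (Equiv.swap s t).toEmbedding := by
  have augCol_swap (k : Fin M.n) : M.augCol (Equiv.swap s t k) = M.augCol k := by
    rw [Equiv.swap_apply_def]
    split_ifs with hs ht
    exacts [hs ▸ h.symm, ht ▸ h, rfl]
  have B_swap (i k : Fin M.n) : M.B i (Equiv.swap s t k) = M.B i k :=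
    congrFun (congrArg Prod.fst (augCol_swap k)) i
  refine ⟨fun i j ↦ ?_, fun i ↦ (congrArg Prod.snd (augCol_swap i)).symm⟩
  calc M.B i j = -M.B j (Equiv.swap s t i) := by rw [B_swap, B_apply_comm]
    _ = M.B (Equiv.swap s t i) (Equiv.swap s t j) := by rw [← B_apply_comm, B_swap]

lemma exists_factor {e : Fin N.n ↪ Fin M.n} {f : Fin P.n ↪ Fin M.n} (he : IsSubmatrix M N e)
    (hf : IsSubmatrix M P f) (hfe : Set.range f ⊆ Set.range e) :
    ∃ g : Fin P.n ↪ Fin N.n, g.trans e = f ∧ IsSubmatrix N P g := by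
  choose g hg using fun i ↦ hfe ⟨i, rfl⟩
  have g_injective : g.Injective := fun i j hij ↦ f.injective (by rw [← hg i, ← hg j, hij])
  refine ⟨⟨g, g_injective⟩, DFunLike.ext _ _ hg, fun i j ↦ ?_, fun i ↦ ?_⟩
  · simp [hf.B_apply, he.B_apply, hg]
  · simp [hf.A_apply, he.A_apply, hg]

lemma red1Cond {e : Fin N.n ↪ Fin M.n} (he : IsSubmatrix M N e) {j : Fin N.n}
    (h : M.Red1Cond (e j)) : N.Red1Cond j := by
  simp only [Red1Cond, he.B_apply, he.A_apply]
  exact ⟨h.1, h.2.imp (fun h i ↦ h (e i)) (fun h i ↦ h (e i))⟩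

lemma red2Cond {e : Fin N.n ↪ Fin M.n} (he : IsSubmatrix M N e) {r t : Fin N.n}
    (h : M.Red2Cond (e r) (e t)) : N.Red2Cond r t := by
  simp only [Red2Cond, he.B_apply, he.A_apply]
  exact ⟨fun hrt ↦ h.1 (congrArg e hrt), h.2.1, fun i ↦ h.2.2 (e i)⟩

end IsSubmatrix

lemma exists_isSubmatrix_range_eq (M : SkewAug) (S : Set (Fin M.n)) :
    ∃ (N : SkewAug) (e : Fin N.n ↪ Fin M.n), IsSubmatrix M N e ∧ Set.range e = S := by
  let e : Fin (Nat.card S) ↪ Fin M.n :=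
    (Finite.equivFin S).symm.toEmbedding.trans (.subtype (· ∈ S))
  refine ⟨⟨_, M.B.submatrix e e, M.A ∘ e, ?_⟩, e, ⟨fun _ _ ↦ rfl, fun _ ↦ rfl⟩, ?_⟩
  · rw [Matrix.transpose_submatrix, M.skew, Matrix.submatrix_neg]
    rfl
  · exact ((Finite.equivFin S).symm.surjective.range_comp _).trans Subtype.range_coe

end Submatrix

section Permutation

open Matrix

lemma permMatrixOf_eq_permMatrix {n : ℕ} (σ : Equiv.Perm (Fin n)) :
    permMatrixOf σ = σ⁻¹.permMatrix ℤ := by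
  ext i j
  simp [permMatrixOf, PEquiv.toMatrix_apply, Equiv.Perm.inv_def, Equiv.symm_apply_eq, @eq_comm _ i]

lemma permMatrixOf_mul_mul_transpose {n : ℕ} (σ : Equiv.Perm (Fin n))
    (B : Matrix (Fin n) (Fin n) ℤ) :
    permMatrixOf σ * B * (permMatrixOf σ)ᵀ = B.submatrix σ.symm σ.symm := by
  rw [permMatrixOf_eq_permMatrix, transpose_permMatrix, PEquiv.toMatrix_toPEquiv_mul,
    PEquiv.mul_toMatrix_toPEquiv, submatrix_submatrix]
  rfl

lemma permMatrixOf_mulVec {n : ℕ} (σ : Equiv.Perm (Fin n)) (v : Fin n → ℤ) :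
    permMatrixOf σ *ᵥ v = v ∘ σ.symm := by
  rw [permMatrixOf_eq_permMatrix, permMatrix_mulVec]
  rfl

lemma permStep_iff :
    PermStep M N ↔ ∃ e : Fin N.n ≃ Fin M.n, IsSubmatrix M N e.toEmbedding := by
  constructor
  · rintro ⟨h, _, ⟨σ, rfl⟩, hB, hA⟩
    rw [permMatrixOf_mul_mul_transpose] at hB
    rw [permMatrixOf_mulVec] at hA
    exact ⟨σ.symm.trans (finCongr h.symm), fun i j ↦ congrFun (congrFun hB i) j, congrFun hA⟩
  · rintro ⟨e, he⟩
    have h : M.n = N.n := Fin.equiv_iff_eq.1 ⟨e.symm⟩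
    refine ⟨h, _, ⟨(e.trans (finCongr h)).symm, rfl⟩, ?_, ?_⟩
    · rw [permMatrixOf_mul_mul_transpose]
      ext i j
      simp [he.B_apply]
    · rw [permMatrixOf_mulVec]
      ext i
      simp [he.A_apply]

lemma PermStep.refl (M : SkewAug) : PermStep M M := permStep_iff.2 ⟨.refl _, .refl M⟩

lemma PermStep.symm (h : PermStep M N) : PermStep N M := by
  obtain ⟨e, he⟩ := permStep_iff.1 h
  exact permStep_iff.2 ⟨e.symm, he.symm⟩

lemma PermStep.trans (h : PermStep M N) (h' : PermStep N P) : PermStep M P := by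
  obtain ⟨e, he⟩ := permStep_iff.1 h
  obtain ⟨f, hf⟩ := permStep_iff.1 h'
  exact permStep_iff.2 ⟨f.trans e, he.trans hf⟩

lemma PermStep.irreducible (h : PermStep M N) (hM : M.Irreducible) : N.Irreducible := by
  obtain ⟨e, he⟩ := permStep_iff.1 h.symm
  rintro (⟨j, hj⟩ | ⟨r, t, hrt⟩)
  · exact hM (.inl ⟨e.symm j, he.red1Cond (by simpa using hj)⟩)
  · exact hM (.inr ⟨e.symm r, e.symm t, he.red2Cond (by simpa using hrt)⟩)

end Permutation

section Reduction

/-- The index sets that can be deleted from `M` in one step. The empty set is included so that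
permutations and disjoint pairs of reductions need no separate treatment. -/
inductive Removable (M : SkewAug) : Set (Fin M.n) → Prop
  | empty : Removable M ∅
  | singleton {j : Fin M.n} (h : M.Red1Cond j) : Removable M {j}
  | pair {r t : Fin M.n} (h : M.Red2Cond r t) : Removable M {r, t}

/-- `M` becomes a permutation of `N` after at most one reduction. -/
def ReducesTo (M N : SkewAug) : Prop :=
  ∃ e : Fin N.n ↪ Fin M.n, IsSubmatrix M N e ∧ M.Removable (Set.range e)ᶜ

lemma Removable.eq_singleton_or_eq_pair {D : Set (Fin M.n)} (hD : M.Removable D) {r : Fin M.n}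
    (hr : r ∈ D) : (D = {r} ∧ M.Red1Cond r) ∨ ∃ t, D = {r, t} ∧ M.Red2Cond r t := by
  cases hD with
  | empty => exact absurd hr (Set.notMem_empty r)
  | singleton h =>
    obtain rfl := Set.mem_singleton_iff.1 hr
    exact .inl ⟨rfl, h⟩
  | @pair s t h =>
    rcases hr with rfl | rfl
    · exact .inr ⟨t, rfl, h⟩
    · exact .inr ⟨s, Set.pair_comm _ _, h.symm⟩

lemma Removable.preimage {e : Fin N.n ↪ Fin M.n} (he : IsSubmatrix M N e) {D : Set (Fin M.n)}
    (hD : M.Removable D) (hDe : D ⊆ Set.range e) : N.Removable (e ⁻¹' D) := by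
  cases hD with
  | empty => exact .empty
  | singleton h =>
    obtain ⟨j, rfl⟩ := hDe rfl
    rw [← Set.image_singleton, Set.preimage_image_eq _ e.injective]
    exact .singleton (he.red1Cond h)
  | pair h =>
    obtain ⟨r, rfl⟩ := hDe (.inl rfl)
    obtain ⟨t, rfl⟩ := hDe (.inr rfl)
    rw [← Set.image_pair, Set.preimage_image_eq _ e.injective]
    exact .pair (he.red2Cond h)

lemma Irreducible.eq_empty_of_removable (hM : M.Irreducible) {D : Set (Fin M.n)}
    (hD : M.Removable D) : D = ∅ := by
  cases hD with
  | empty => rfl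
  | singleton h => exact absurd (.inl ⟨_, h⟩) hM
  | pair h => exact absurd (.inr ⟨_, _, h⟩) hM

lemma PermStep.reducesTo (h : PermStep M N) : ReducesTo M N := by
  obtain ⟨e, he⟩ := permStep_iff.1 h
  exact ⟨e.toEmbedding, he, by simpa using Removable.empty⟩

lemma DeleteAt.reducesTo {D : Set (Fin M.n)} (h : DeleteAt M D N) (hD : M.Removable D) :
    ReducesTo M N := by
  obtain ⟨e, e_mono, range_e, hB, hA⟩ := h
  have compl_range : (Set.range e)ᶜ = D := by
    ext k
    rw [Set.mem_compl_iff, range_e, not_not]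
  exact ⟨⟨e, e_mono.injective⟩, ⟨hB, hA⟩, compl_range ▸ hD⟩

lemma Red1.reducesTo (h : Red1 M N) : ReducesTo M N := by
  obtain ⟨j, hj, h⟩ := h
  exact h.reducesTo (.singleton hj)

lemma Red2.reducesTo (h : Red2 M N) : ReducesTo M N := by
  obtain ⟨r, t, hrt, h⟩ := h
  exact h.reducesTo (.pair hrt)

lemma Move.reducesTo_or_reducesTo (h : Move M N) : ReducesTo M N ∨ ReducesTo N M := by
  rcases h with h | h | h | h | h
  exacts [.inl h.reducesTo, .inl h.reducesTo, .inl h.reducesTo, .inr h.reducesTo,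
    .inr h.reducesTo]

lemma ReducesTo.permStep_of_irreducible (h : ReducesTo M N) (hM : M.Irreducible) :
    PermStep M N := by
  obtain ⟨e, he, he_removable⟩ := h
  have e_surjective : Function.Surjective e :=
    Set.range_eq_univ.1 (Set.compl_empty_iff.1 (hM.eq_empty_of_removable he_removable))
  exact permStep_iff.2 ⟨.ofBijective e ⟨e.injective, e_surjective⟩, he.B_apply, he.A_apply⟩

end Reduction

section Confluence

open Relation

lemma ReducesTo.refl (M : SkewAug) : ReducesTo M M := (PermStep.refl M).reducesTo

namespace IsSubmatrix

variable {e : Fin N.n ↪ Fin M.n} {f : Fin P.n ↪ Fin M.n}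

lemma reducesTo (he : IsSubmatrix M N e) (hf : IsSubmatrix M P f) {D : Set (Fin M.n)}
    (hD : M.Removable D) (disjoint : Disjoint (Set.range e)ᶜ D)
    (hfe : (Set.range f)ᶜ = (Set.range e)ᶜ ∪ D) : ReducesTo N P := by
  obtain ⟨g, rfl, hg⟩ := he.exists_factor hf
    (Set.compl_subset_compl.1 (hfe ▸ Set.subset_union_left))
  have range_g : (Set.range g)ᶜ = e ⁻¹' D := by
    ext i
    simpa using Set.ext_iff.1 hfe (e i)
  exact ⟨g, hg, range_g ▸ hD.preimage he (Set.disjoint_compl_left_iff_subset.1 disjoint)⟩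

lemma reducesTo_of_range_eq (he : IsSubmatrix M N e) (hf : IsSubmatrix M P f)
    (h : Set.range e = Set.range f) : ReducesTo N P :=
  he.reducesTo hf .empty (Set.disjoint_empty _) (by rw [h, Set.union_empty])

lemma reducesTo_of_augCol_eq (he : IsSubmatrix M N e) (hf : IsSubmatrix M P f) {r t t' : Fin M.n}
    (hrt : r ≠ t) (hrt' : r ≠ t') (h : M.augCol t = M.augCol t')
    (range_e : (Set.range e)ᶜ = {r, t}) (range_f : (Set.range f)ᶜ = {r, t'}) :
    ReducesTo N P := by
  refine he.reducesTo_of_range_eq ((IsSubmatrix.swap h).trans hf) (compl_injective ?_)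
  rw [Function.Embedding.coe_trans, Set.range_comp, Equiv.coe_toEmbedding,
    ← Set.image_compl_eq (Equiv.bijective _), range_f, range_e, Set.image_pair,
    Equiv.swap_apply_of_ne_of_ne hrt hrt', Equiv.swap_apply_right]

lemma reducesTo_or_reducesTo (he : IsSubmatrix M N e) (hf : IsSubmatrix M P f)
    (hD : M.Removable (Set.range e)ᶜ) (hE : M.Removable (Set.range f)ᶜ)
    (not_disjoint : ¬Disjoint (Set.range e)ᶜ (Set.range f)ᶜ) :
    ReducesTo N P ∨ ReducesTo P N := by
  obtain ⟨r, hrD, hrE⟩ := Set.not_disjoint_iff.1 not_disjoint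
  rcases hD.eq_singleton_or_eq_pair hrD with ⟨hD, hr⟩ | ⟨t, hD, hrt⟩ <;>
    rcases hE.eq_singleton_or_eq_pair hrE with ⟨hE, hr'⟩ | ⟨t', hE, hrt'⟩
  · exact .inl (he.reducesTo_of_range_eq hf (compl_injective (hD.trans hE.symm)))
  · refine .inl (he.reducesTo hf (.singleton (hr.of_red2Cond hrt')) ?_ ?_)
    · exact hD ▸ Set.disjoint_singleton.2 hrt'.1
    · rw [hD, hE, Set.singleton_union]
  · refine .inr (hf.reducesTo he (.singleton (hr'.of_red2Cond hrt)) ?_ ?_)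
    · exact hE ▸ Set.disjoint_singleton.2 hrt.1
    · rw [hD, hE, Set.singleton_union]
  · exact .inl (he.reducesTo_of_augCol_eq hf hrt.1 hrt'.1 (hrt.augCol_eq hrt') hD hE)

end IsSubmatrix

theorem ReducesTo.diamond (hN : ReducesTo M N) (hP : ReducesTo M P) :
    ∃ Q, ReducesTo N Q ∧ ReducesTo P Q := by
  obtain ⟨e, he, hD⟩ := hN
  obtain ⟨f, hf, hE⟩ := hP
  by_cases disjoint : Disjoint (Set.range e)ᶜ (Set.range f)ᶜ
  · obtain ⟨Q, g, hg, range_g⟩ := M.exists_isSubmatrix_range_eq (Set.range e ∩ Set.range f)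
    have compl_range_g : (Set.range g)ᶜ = (Set.range e)ᶜ ∪ (Set.range f)ᶜ := by
      rw [range_g, Set.compl_inter]
    exact ⟨Q, he.reducesTo hg hE disjoint compl_range_g,
      hf.reducesTo hg hD disjoint.symm (compl_range_g.trans (Set.union_comm _ _))⟩
  · rcases he.reducesTo_or_reducesTo hf hD hE disjoint with h | h
    exacts [⟨P, h, .refl P⟩, ⟨N, .refl N, h⟩]

theorem SEquiv.join_reducesTo (h : SEquiv M N) : Join (ReflTransGen ReducesTo) M N := by
  have join_equivalence : Equivalence (Join (ReflTransGen ReducesTo)) :=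
    equivalence_join_reflTransGen fun _ _ _ hN hP ↦
      let ⟨Q, hNQ, hPQ⟩ := hN.diamond hP
      ⟨Q, .single hNQ, .single hPQ⟩
  refine reflTransGen_le_of_equivalence_of_le join_equivalence (fun K L hKL ↦ ?_) M N h
  rcases hKL.reducesTo_or_reducesTo with h | h
  exacts [⟨L, .single h, .refl⟩, ⟨K, .refl, .single h⟩]

lemma Irreducible.permStep_of_reflTransGen (hM : M.Irreducible)
    (h : ReflTransGen ReducesTo M N) : PermStep M N := by
  induction h with
  | refl => exact .refl M
  | tail _ hNP hMN => exact hMN.trans (hNP.permStep_of_irreducible (hMN.irreducible hM))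

theorem SEquiv.permStep_of_irreducible (h : SEquiv M N) (hM : M.Irreducible)
    (hN : N.Irreducible) : PermStep M N := by
  obtain ⟨P, hMP, hNP⟩ := h.join_reducesTo
  exact (hM.permStep_of_reflTransGen hMP).trans (hN.permStep_of_reflTransGen hNP).symm

end Confluence

lemma irreducible_empty : empty.Irreducible := by
  rintro (⟨j, -⟩ | ⟨r, -⟩)
  exacts [j.elim0, r.elim0]

end SkewAug

/-- An irreducible skew-symmetric augmented matrix of dimension
`n ≥ 1` is not trivial, i.e., not S-equivalent to the empty matrix. -/
theorem irreducible_not_trivial (M : SkewAug)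
    (hM : SkewAug.Irreducible M) (hn : 1 ≤ M.n) :
    ¬ SkewAug.Trivial M := by
  intro hTrivial
  obtain ⟨n_eq_zero, -⟩ := hTrivial.permStep_of_irreducible hM SkewAug.irreducible_empty
  exact absurd n_eq_zero (Nat.one_le_iff_ne_zero.1 hn)
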